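/- Let G=(V,E) be a finite connected simple graph with growth rate γ(G), let A(G) be its adjacency matrix, and let ρ be the spectral radius (largest eigenvalue) of A(G) + I, where I is the identity matrix indexed by V. Then γ(G) ≤ e·ρ, where e is Euler's number. (Theorem 3.) -/

import Mathlib

open MeasureTheory Filter Topology
open scoped ENNReal Classical

/-- The ballistic deposition height process on a graph `G`, started from `h0`,
driven by the sequence of chosen vertices `X`. -/
noncomputable def heightProcess {V : Type*} [Fintype V] (G : SimpleGraph V)
    (h0 : V → ℕ) (X : ℕ → V) : ℕ → V → ℕ
  | 0 => h0
  | n + 1 => fun x =>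
      if x = X n then
        1 + Finset.univ.sup (fun y =>
          if y = x ∨ G.Adj x y then heightProcess G h0 X n y else 0)
      else heightProcess G h0 X n x

/-- `X` is an i.i.d. sequence of uniformly distributed `V`-valued random variables on `(Ω, μ)`:
every finite cylinder event has the product-of-uniform probabilities. -/
def IsUniformIID {V : Type*} [Fintype V] {Ω : Type*} [MeasurableSpace Ω]
    (μ : Measure Ω) (X : ℕ → Ω → V) : Prop :=
  (∀ (n : ℕ) (v : V), MeasurableSet {ω | X n ω = v}) ∧
  (∀ (n : ℕ) (f : ℕ → V), μ {ω | ∀ k < n, X k ω = f k} = (Fintype.card V : ℝ≥0∞)⁻¹ ^ n)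

/-- `γ` is the growth rate of `G`: `γ > 0` and, for any i.i.d. uniform driving sequence,
almost surely `(#V/n) · max_x H_{x,n} → γ` and `(#V/n) · min_x H_{x,n} → γ`. -/
def IsGrowthRate {V : Type*} [Fintype V] (G : SimpleGraph V) (γ : ℝ) : Prop :=
  0 < γ ∧
  ∀ {Ω : Type} [MeasurableSpace Ω] (μ : Measure Ω) [IsProbabilityMeasure μ]
    (X : ℕ → Ω → V), IsUniformIID μ X →
    (∀ᵐ ω ∂μ, Tendsto (fun n : ℕ =>
        (Fintype.card V : ℝ) *
          (⨆ x : V, (heightProcess G (fun _ => 0) (fun k => X k ω) n x : ℝ)) / n)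
      atTop (𝓝 γ)) ∧
    (∀ᵐ ω ∂μ, Tendsto (fun n : ℕ =>
        (Fintype.card V : ℝ) *
          (⨅ x : V, (heightProcess G (fun _ => 0) (fun k => X k ω) n x : ℝ)) / n)
      atTop (𝓝 γ))

/-!
Write `N = #V` and let `t > 0`. Of the `N` possible deposits only the one at `x` changes the
height there: the new value of `exp (t H_x)` is `exp t` times its old value at some closed
neighbour. Summed over all words of length `n`, the exponential moments of the heights are
therefore dominated by powers of `N + exp t (A(G) + I)`. The `ℓ²` operator norm of `A(G) + I` is
at most its largest eigenvalue `ρ`, so the moments grow at most like `(N + exp t ρ) ^ n`. Markov's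
inequality and the Borel–Cantelli lemma give, almost surely, `N H_{x,n} < a n` eventually, for
every `a` with `exp t ρ < t a`. Hence `γ ≤ (exp t / t) ρ`, and `t = 1` is the optimal choice.
-/

open scoped Matrix

section NonnegMatrix

open scoped Matrix.Norms.L2Operator

variable {ι : Type*} [Fintype ι] {M : Matrix ι ι ℝ}

lemma mulVec_mono_of_nonneg (hM : ∀ i j, 0 ≤ M i j) : Monotone (M *ᵥ ·) := fun _ _ huv i ↦
  dotProduct_le_dotProduct_of_nonneg_left huv (hM i)

lemma abs_dotProduct_mulVec_le (hM : ∀ i j, 0 ≤ M i j) (v : ι → ℝ) :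
    |v ⬝ᵥ M *ᵥ v| ≤ |v| ⬝ᵥ M *ᵥ |v| := by
  simp only [Matrix.dot_mulVec_eq_sum_sum, Pi.abs_apply]
  calc |∑ j, ∑ i, v i * M i j * v j| ≤ ∑ j, ∑ i, |v i * M i j * v j| :=
        (Finset.abs_sum_le_sum_abs _ _).trans
          (Finset.sum_le_sum fun _ _ ↦ Finset.abs_sum_le_sum_abs _ _)
    _ = ∑ j, ∑ i, |v i| * M i j * |v j| := by simp only [abs_mul, abs_of_nonneg (hM _ _)]

variable [DecidableEq ι]

lemma le_pow_mulVec_of_succ_le_mulVec (hM : ∀ i j, 0 ≤ M i j) {u : ℕ → ι → ℝ}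
    (hu : ∀ n, u (n + 1) ≤ M *ᵥ u n) (n : ℕ) : u n ≤ (M ^ n) *ᵥ u 0 := by
  induction n with
  | zero => simp
  | succ n ih =>
    rw [pow_succ', ← Matrix.mulVec_mulVec]
    exact (hu n).trans (mulVec_mono_of_nonneg hM ih)

lemma norm_pow_mulVec_le (v : ι → ℝ) (n : ℕ) :
    ‖WithLp.toLp 2 ((M ^ n) *ᵥ v)‖ ≤ ‖M‖ ^ n * ‖WithLp.toLp 2 v‖ := by
  induction n with
  | zero => simp
  | succ n ih =>
    rw [pow_succ', ← Matrix.mulVec_mulVec, pow_succ', mul_assoc]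
    exact (Matrix.l2_opNorm_mulVec M (WithLp.toLp 2 ((M ^ n) *ᵥ v))).trans (by gcongr)

lemma dotProduct_mulVec_le_of_spectrum_le (hM : M.IsHermitian) {ρ : ℝ}
    (hρ : ρ ∈ upperBounds (spectrum ℝ M)) (v : ι → ℝ) : v ⬝ᵥ M *ᵥ v ≤ ρ * (v ⬝ᵥ v) := by
  have hpsd : (algebraMap ℝ (Matrix ι ι ℝ) ρ - M).PosSemidef := by
    rw [Matrix.posSemidef_iff_isHermitian_and_spectrum_nonneg, ← spectrum.singleton_sub_eq,
      Set.singleton_sub]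
    refine ⟨(Matrix.isHermitian_diagonal _).sub hM, ?_⟩
    rintro _ ⟨μ, hμ, rfl⟩
    exact sub_nonneg.2 (hρ hμ)
  simpa [Algebra.algebraMap_eq_smul_one, Matrix.sub_mulVec, Matrix.smul_mulVec, dotProduct_sub]
    using hpsd.dotProduct_mulVec_nonneg v

lemma l2_opNorm_le_of_abs_dotProduct_mulVec_le (hM : M.IsHermitian) {ρ : ℝ} (hρ : 0 ≤ ρ)
    (h : ∀ v : ι → ℝ, |v ⬝ᵥ M *ᵥ v| ≤ ρ * (v ⬝ᵥ v)) : ‖M‖ ≤ ρ := by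
  have hsymm : (Matrix.toEuclideanCLM (𝕜 := ℝ) M).toLinearMap.IsSymmetric :=
    Matrix.isSymmetric_toEuclideanLin_iff.2 hM
  rw [← Matrix.l2_opNorm_toEuclideanCLM, ContinuousLinearMap.norm_eq_iSup_rayleighQuotient _ hsymm]
  refine ciSup_le fun x ↦ ?_
  rw [ContinuousLinearMap.rayleighQuotient, abs_div, abs_of_nonneg (sq_nonneg ‖x‖)]
  refine div_le_of_le_mul₀ (sq_nonneg _) hρ ?_
  rw [ContinuousLinearMap.reApplyInnerSelf_apply, real_inner_comm, Matrix.inner_toEuclideanCLM,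
    ← real_inner_self_eq_norm_sq, EuclideanSpace.inner_eq_star_dotProduct]
  simpa using h x.ofLp

lemma nonneg_of_spectrum_le [Nonempty ι] (hM : M.IsHermitian) (hM₀ : ∀ i j, 0 ≤ M i j) {ρ : ℝ}
    (hρ : ρ ∈ upperBounds (spectrum ℝ M)) : 0 ≤ ρ := by
  obtain ⟨i⟩ := ‹Nonempty ι›
  have hi := dotProduct_mulVec_le_of_spectrum_le hM hρ (Pi.single i 1)
  simp only [single_one_dotProduct, Matrix.mulVec_single_one, Matrix.col_apply, Pi.single_eq_same,
    mul_one] at hi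
  exact (hM₀ i i).trans hi

-- This part of Perron–Frobenius needs no irreducibility: passing from `v` to `|v|` turns the
-- bound on the largest eigenvalue into a bound on the whole quadratic form.
lemma l2_opNorm_le_of_nonneg_of_spectrum_le [Nonempty ι] (hM : M.IsHermitian)
    (hM₀ : ∀ i j, 0 ≤ M i j) {ρ : ℝ} (hρ : ρ ∈ upperBounds (spectrum ℝ M)) : ‖M‖ ≤ ρ := by
  refine l2_opNorm_le_of_abs_dotProduct_mulVec_le hM
    (nonneg_of_spectrum_le hM hM₀ hρ) fun v ↦ ?_
  calc |v ⬝ᵥ M *ᵥ v| ≤ |v| ⬝ᵥ M *ᵥ |v| := abs_dotProduct_mulVec_le hM₀ v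
    _ ≤ ρ * (|v| ⬝ᵥ |v|) := dotProduct_mulVec_le_of_spectrum_le hM hρ |v|
    _ = ρ * (v ⬝ᵥ v) := by simp [dotProduct]

end NonnegMatrix

section Height

variable {V : Type*} (G : SimpleGraph V)

lemma adjMatrix_add_one_nonneg [DecidableEq V] [DecidableRel G.Adj] (x y : V) :
    0 ≤ (G.adjMatrix ℝ + 1) x y := by
  simp only [Matrix.add_apply, SimpleGraph.adjMatrix_apply, Matrix.one_apply]
  positivity

lemma isHermitian_adjMatrix_add_one [DecidableEq V] [DecidableRel G.Adj] :
    (G.adjMatrix ℝ + 1).IsHermitian :=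
  (G.isHermitian_adjMatrix ℝ).add Matrix.isHermitian_one

variable [Fintype V] (h0 : V → ℕ) (t : ℝ)

lemma heightProcess_congr {X Y : ℕ → V} {n : ℕ} (h : ∀ k < n, X k = Y k) :
    heightProcess G h0 X n = heightProcess G h0 Y n := by
  induction n with
  | zero => rfl
  | succ n ih =>
    simp only [heightProcess, h n n.lt_succ_self, ih fun k hk ↦ h k (hk.trans n.lt_succ_self)]

lemma exists_heightProcess_succ_eq_one_add (X : ℕ → V) (n : ℕ) :
    ∃ y, (y = X n ∨ G.Adj (X n) y) ∧
      heightProcess G h0 X (n + 1) (X n) = 1 + heightProcess G h0 X n y := by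
  set H : V → ℕ := fun y ↦ if y = X n ∨ G.Adj (X n) y then heightProcess G h0 X n y else 0
  have hsucc : heightProcess G h0 X (n + 1) (X n) = 1 + Finset.univ.sup H := if_pos rfl
  obtain ⟨y, -, hy⟩ := Finset.exists_mem_eq_sup Finset.univ ⟨X n, Finset.mem_univ _⟩ H
  by_cases hadj : y = X n ∨ G.Adj (X n) y
  · exact ⟨y, hadj, by rw [hsucc, hy]; simp only [H, if_pos hadj]⟩
  · have hsup : Finset.univ.sup H = 0 := hy.trans (if_neg hadj)
    have hle : heightProcess G h0 X n (X n) ≤ Finset.univ.sup H :=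
      (if_pos (.inl rfl)).symm.trans_le (Finset.le_sup (f := H) (Finset.mem_univ (X n)))
    exact ⟨X n, .inl rfl, by rw [hsucc, hsup, Nat.le_zero.1 (hle.trans_eq hsup)]⟩

section TransferMatrix

variable [DecidableEq V] [DecidableRel G.Adj]

lemma le_adjMatrix_add_one_mulVec {f : V → ℝ} (hf : 0 ≤ f) {x y : V} (hy : y = x ∨ G.Adj x y) :
    f y ≤ ((G.adjMatrix ℝ + 1) *ᵥ f) x := by
  have hentry : 1 ≤ (G.adjMatrix ℝ + 1) x y := by
    rcases hy with rfl | hadj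
    · simp
    · simp [hadj, hadj.ne]
  calc f y ≤ (G.adjMatrix ℝ + 1) x y * f y := le_mul_of_one_le_left (hf y) hentry
    _ ≤ ∑ z, (G.adjMatrix ℝ + 1) x z * f z :=
      Finset.single_le_sum (f := fun z ↦ (G.adjMatrix ℝ + 1) x z * f z)
        (fun z _ ↦ mul_nonneg (adjMatrix_add_one_nonneg G x z) (hf z)) (Finset.mem_univ y)

lemma exp_mul_heightProcess_succ_le (X : ℕ → V) (n : ℕ) (x : V) :
    Real.exp (t * heightProcess G h0 X (n + 1) x) ≤ Real.exp (t * heightProcess G h0 X n x) +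
      if X n = x then Real.exp t *
        ((G.adjMatrix ℝ + 1) *ᵥ fun y ↦ Real.exp (t * heightProcess G h0 X n y)) x else 0 := by
  split_ifs with hx
  · subst hx
    obtain ⟨y, hy, hsucc⟩ := exists_heightProcess_succ_eq_one_add G h0 X n
    calc Real.exp (t * heightProcess G h0 X (n + 1) (X n))
        = Real.exp t * Real.exp (t * heightProcess G h0 X n y) := by
          rw [hsucc, ← Real.exp_add]; push_cast; ring_nf
      _ ≤ Real.exp t *
          ((G.adjMatrix ℝ + 1) *ᵥ fun z ↦ Real.exp (t * heightProcess G h0 X n z)) (X n) := by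
          gcongr
          exact le_adjMatrix_add_one_mulVec G
            (f := fun z ↦ Real.exp (t * heightProcess G h0 X n z)) (fun _ ↦ (Real.exp_pos _).le) hy
      _ ≤ _ := le_add_of_nonneg_left (Real.exp_pos _).le
  · have hstay : heightProcess G h0 X (n + 1) x = heightProcess G h0 X n x := if_neg (Ne.symm hx)
    rw [hstay, add_zero]

/-- The matrix `#V + exp t (A(G) + I)`, which dominates one step of the exponential moments of the
heights (see `heightMoment_succ_le`). -/
noncomputable def transferMatrix : Matrix V V ℝ :=
  (Fintype.card V : ℝ) • (1 : Matrix V V ℝ) + Real.exp t • (G.adjMatrix ℝ + 1)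

lemma transferMatrix_nonneg (x y : V) : 0 ≤ transferMatrix G t x y := add_nonneg
  (mul_nonneg (Nat.cast_nonneg _) (by rw [Matrix.one_apply]; positivity))
  (mul_nonneg (Real.exp_pos t).le (adjMatrix_add_one_nonneg G x y))

open scoped Matrix.Norms.L2Operator in
lemma l2_opNorm_transferMatrix_le [Nonempty V] {ρ : ℝ}
    (hρ : ρ ∈ upperBounds (spectrum ℝ (G.adjMatrix ℝ + 1))) :
    ‖transferMatrix G t‖ ≤ Fintype.card V + Real.exp t * ρ := by
  calc ‖transferMatrix G t‖
      ≤ ‖(Fintype.card V : ℝ) • (1 : Matrix V V ℝ)‖ + ‖Real.exp t • (G.adjMatrix ℝ + 1)‖ :=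
        norm_add_le _ _
    _ = Fintype.card V + Real.exp t * ‖G.adjMatrix ℝ + 1‖ := by
        rw [norm_smul, norm_smul, CStarRing.norm_one, mul_one, Real.norm_natCast, Real.norm_eq_abs,
          Real.abs_exp]
    _ ≤ Fintype.card V + Real.exp t * ρ := by
        gcongr
        exact l2_opNorm_le_of_nonneg_of_spectrum_le (isHermitian_adjMatrix_add_one G)
          (adjMatrix_add_one_nonneg G) hρ

end TransferMatrix

section Words

variable [Nonempty V] {n : ℕ}

/-- The heights reached from `h0` after the deposits prescribed by a finite word `w`. The word is
padded to an infinite driving sequence; `wordHeight_prefix` shows that the padding is irrelevant. -/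
noncomputable def wordHeight (w : Fin n → V) : V → ℕ :=
  heightProcess G h0 (Function.extend Fin.val w fun _ ↦ Classical.arbitrary V) n

lemma wordHeight_prefix (X : ℕ → V) :
    wordHeight G h0 (fun i : Fin n ↦ X i) = heightProcess G h0 X n :=
  heightProcess_congr G h0 fun k hk ↦
    Fin.val_injective.extend_apply (fun i : Fin n ↦ X i) _ ⟨k, hk⟩

lemma exp_mul_wordHeight_snoc_le [DecidableEq V] [DecidableRel G.Adj] (w : Fin n → V) (v x : V) :
    Real.exp (t * wordHeight G h0 (Fin.snoc w v : Fin (n + 1) → V) x) ≤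
      Real.exp (t * wordHeight G h0 w x) +
        if v = x then Real.exp t *
          ((G.adjMatrix ℝ + 1) *ᵥ fun y ↦ Real.exp (t * wordHeight G h0 w y)) x else 0 := by
  set X : ℕ → V := Function.extend Fin.val (Fin.snoc w v : Fin (n + 1) → V)
    fun _ ↦ Classical.arbitrary V
  have hX (i : Fin (n + 1)) : X i = (Fin.snoc w v : Fin (n + 1) → V) i :=
    Fin.val_injective.extend_apply _ _ i
  have hlast : X n = v := by simpa using hX (Fin.last n)
  have hinit : (fun i : Fin n ↦ X i) = w := by
    ext i; simpa using hX i.castSucc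
  have h := exp_mul_heightProcess_succ_le G h0 t X n x
  rwa [← wordHeight_prefix, ← wordHeight_prefix, hinit, hlast, funext hX] at h

/-- The exponential moment of the height at each vertex, as a sum over all words of length `n`
(that is, `(#V) ^ n` times the expectation of `exp (t * H)`). -/
noncomputable def heightMoment (n : ℕ) : V → ℝ :=
  ∑ w : Fin n → V, fun x ↦ Real.exp (t * wordHeight G h0 w x)

-- Among the `#V` letters extending a word, only one can change the height at `x`.
lemma heightMoment_succ_le [DecidableEq V] [DecidableRel G.Adj] (n : ℕ) :
    heightMoment G h0 t (n + 1) ≤ transferMatrix G t *ᵥ heightMoment G h0 t n := by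
  intro x
  let e (w : Fin n → V) : V → ℝ := fun x ↦ Real.exp (t * wordHeight G h0 w x)
  calc heightMoment G h0 t (n + 1) x
      = ∑ w : Fin n → V, ∑ v,
          Real.exp (t * wordHeight G h0 (Fin.snoc w v : Fin (n + 1) → V) x) := by
        rw [heightMoment, Finset.sum_apply, ← (Fin.snocEquiv fun _ ↦ V).sum_comp,
          Fintype.sum_prod_type_right]
        rfl
    _ ≤ ∑ w : Fin n → V, ∑ v,
          (e w x + if v = x then Real.exp t * ((G.adjMatrix ℝ + 1) *ᵥ e w) x else 0) := by
        gcongr with w _ v _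
        exact exp_mul_wordHeight_snoc_le G h0 t w v x
    _ = ∑ w : Fin n → V, (transferMatrix G t *ᵥ e w) x := by
        simp [transferMatrix, Finset.sum_add_distrib, Matrix.add_mulVec, Matrix.smul_mulVec,
          mul_add]
    _ = _ := by rw [heightMoment, Matrix.mulVec_sum, Finset.sum_apply]

open scoped Matrix.Norms.L2Operator in
lemma heightMoment_apply_le [DecidableEq V] [DecidableRel G.Adj] {ρ : ℝ}
    (hρ : ρ ∈ upperBounds (spectrum ℝ (G.adjMatrix ℝ + 1))) (n : ℕ) (x : V) :
    heightMoment G h0 t n x ≤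
      (Fintype.card V + Real.exp t * ρ) ^ n * ‖WithLp.toLp 2 (heightMoment G h0 t 0)‖ := by
  set u₀ := heightMoment G h0 t 0
  calc heightMoment G h0 t n x ≤ ((transferMatrix G t ^ n) *ᵥ u₀) x :=
        le_pow_mulVec_of_succ_le_mulVec (transferMatrix_nonneg G t)
          (heightMoment_succ_le G h0 t) n x
    _ ≤ ‖WithLp.toLp 2 ((transferMatrix G t ^ n) *ᵥ u₀)‖ :=
        (le_abs_self _).trans
          (PiLp.norm_apply_le (WithLp.toLp 2 ((transferMatrix G t ^ n) *ᵥ u₀)) x)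
    _ ≤ ‖transferMatrix G t‖ ^ n * ‖WithLp.toLp 2 u₀‖ := norm_pow_mulVec_le u₀ n
    _ ≤ (Fintype.card V + Real.exp t * ρ) ^ n * ‖WithLp.toLp 2 u₀‖ := by
        gcongr
        exact l2_opNorm_transferMatrix_le G t hρ

lemma card_filter_le_wordHeight_mul_exp_le (ht : 0 ≤ t) (n : ℕ) (s : ℝ) :
    (Finset.univ.filter fun w : Fin n → V ↦ ∃ x, s ≤ wordHeight G h0 w x).card * Real.exp (t * s) ≤
      ∑ x, heightMoment G h0 t n x := by
  simp only [heightMoment, Finset.sum_apply]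
  rw [Finset.sum_comm, ← nsmul_eq_mul]
  refine (Finset.card_nsmul_le_sum _ _ _ fun w hw ↦ ?_).trans
    (Finset.sum_le_sum_of_subset_of_nonneg (Finset.filter_subset _ _)
      fun w _ _ ↦ Finset.sum_nonneg fun x _ ↦ (Real.exp_pos _).le)
  obtain ⟨x, hx⟩ := (Finset.mem_filter.1 hw).2
  calc Real.exp (t * s) ≤ Real.exp (t * wordHeight G h0 w x) := by gcongr
    _ ≤ ∑ y, Real.exp (t * wordHeight G h0 w y) :=
      Finset.single_le_sum (f := fun y ↦ Real.exp (t * wordHeight G h0 w y))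
        (fun y _ ↦ (Real.exp_pos _).le) (Finset.mem_univ x)

end Words

end Height

section DrivingSequence

variable {V : Type*} [Fintype V] {Ω : Type*} [MeasurableSpace Ω] {μ : Measure Ω} {X : ℕ → Ω → V}

namespace IsUniformIID

lemma measure_prefix_mem_le [Nonempty V] (hX : IsUniformIID μ X) {n : ℕ} (S : Finset (Fin n → V)) :
    μ {ω | (fun i : Fin n ↦ X i ω) ∈ S} ≤ ENNReal.ofReal (S.card / (Fintype.card V : ℝ) ^ n) := by
  have hcylinder (w : Fin n → V) :
      μ {ω | (fun i : Fin n ↦ X i ω) = w} = (Fintype.card V : ℝ≥0∞)⁻¹ ^ n := by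
    rw [← hX.2 n (Function.extend Fin.val w fun _ ↦ Classical.arbitrary V)]
    congr 1
    ext ω
    simp only [Set.mem_ofPred_eq, funext_iff, Fin.forall_iff]
    refine forall₂_congr fun k hk ↦ ?_
    rw [Fin.val_injective.extend_apply w _ ⟨k, hk⟩]
  calc μ {ω | (fun i : Fin n ↦ X i ω) ∈ S}
      = μ (⋃ w ∈ S, {ω | (fun i : Fin n ↦ X i ω) = w}) := by congr 1; ext ω; simp
    _ ≤ ∑ w ∈ S, μ {ω | (fun i : Fin n ↦ X i ω) = w} := measure_biUnion_finset_le _ _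
    _ = ENNReal.ofReal (S.card / (Fintype.card V : ℝ) ^ n) := by
        have hcard : (0 : ℝ) < Fintype.card V := Nat.cast_pos.2 Fintype.card_pos
        rw [Finset.sum_congr rfl fun w _ ↦ hcylinder w, Finset.sum_const, nsmul_eq_mul,
          ENNReal.ofReal_div_of_pos (pow_pos hcard n), ENNReal.ofReal_pow hcard.le,
          ENNReal.ofReal_natCast, ENNReal.ofReal_natCast, ENNReal.div_eq_inv_mul, mul_comm,
          ENNReal.inv_pow]

variable [DecidableEq V] [Nonempty V] (G : SimpleGraph V) [DecidableRel G.Adj] (h0 : V → ℕ)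
  {t a ρ : ℝ}

lemma measure_exists_le_heightProcess_le (hX : IsUniformIID μ X) (ht : 0 ≤ t)
    (hρ : ρ ∈ upperBounds (spectrum ℝ (G.adjMatrix ℝ + 1))) (n : ℕ) (s : ℝ) :
    μ {ω | ∃ x, s ≤ heightProcess G h0 (X · ω) n x} ≤
      ENNReal.ofReal (Fintype.card V * ‖WithLp.toLp 2 (heightMoment G h0 t 0)‖ *
        (1 + Real.exp t * ρ / Fintype.card V) ^ n * Real.exp (-(t * s))) := by
  set N : ℝ := (Fintype.card V : ℝ)
  have hN : 0 < N := Nat.cast_pos.2 Fintype.card_pos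
  set C := ‖WithLp.toLp 2 (heightMoment G h0 t 0)‖
  set S : Finset (Fin n → V) := Finset.univ.filter fun w ↦ ∃ x, s ≤ wordHeight G h0 w x
  have hS : S.card * Real.exp (t * s) ≤ N * ((N + Real.exp t * ρ) ^ n * C) := by
    refine (card_filter_le_wordHeight_mul_exp_le G h0 t ht n s).trans ?_
    refine (Finset.sum_le_card_nsmul _ _ _
      fun x _ ↦ heightMoment_apply_le G h0 t hρ n x).trans_eq ?_
    rw [nsmul_eq_mul, Finset.card_univ]
  calc μ {ω | ∃ x, s ≤ heightProcess G h0 (X · ω) n x}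
      = μ {ω | (fun i : Fin n ↦ X i ω) ∈ S} := by
        congr 1 with ω
        simp only [S, Set.mem_ofPred_eq, Finset.mem_filter_univ, wordHeight_prefix G h0 (X · ω)]
    _ ≤ ENNReal.ofReal (S.card / N ^ n) := hX.measure_prefix_mem_le S
    _ ≤ _ := by
        refine ENNReal.ofReal_le_ofReal ?_
        rw [one_add_div hN.ne', div_pow, Real.exp_neg]
        field_simp
        linarith

lemma ae_eventually_card_mul_heightProcess_lt (hX : IsUniformIID μ X) (ht : 0 ≤ t)
    (hρ : ρ ∈ upperBounds (spectrum ℝ (G.adjMatrix ℝ + 1))) (ha : Real.exp t * ρ < t * a) :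
    ∀ᵐ ω ∂μ, ∀ᶠ n : ℕ in atTop, ∀ x,
      Fintype.card V * (heightProcess G h0 (X · ω) n x : ℝ) < a * n := by
  set N : ℝ := (Fintype.card V : ℝ)
  have hN : 0 < N := Nat.cast_pos.2 Fintype.card_pos
  set C := ‖WithLp.toLp 2 (heightMoment G h0 t 0)‖
  set q : ℝ := Real.exp ((Real.exp t * ρ - t * a) / N)
  have hq : q < 1 := Real.exp_lt_one_iff.2 (div_neg_of_neg_of_pos (sub_neg.2 ha) hN)
  have hbound (n : ℕ) : μ {ω | ∃ x, a * n / N ≤ heightProcess G h0 (X · ω) n x} ≤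
      ENNReal.ofReal (N * C * q ^ n) := by
    refine (hX.measure_exists_le_heightProcess_le G h0 ht hρ n _).trans
      (ENNReal.ofReal_le_ofReal ?_)
    have hρ₀ : 0 ≤ ρ :=
      nonneg_of_spectrum_le (isHermitian_adjMatrix_add_one G) (adjMatrix_add_one_nonneg G) hρ
    calc N * C * (1 + Real.exp t * ρ / N) ^ n * Real.exp (-(t * (a * n / N)))
        ≤ N * C * Real.exp (Real.exp t * ρ / N) ^ n * Real.exp (-(t * (a * n / N))) := by
          gcongr
          exact (add_comm _ _).trans_le (Real.add_one_le_exp _)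
      _ = N * C * q ^ n := by
          rw [mul_assoc, ← Real.exp_nat_mul, ← Real.exp_nat_mul, ← Real.exp_add]
          ring_nf
  have hsum : ∑' n : ℕ, μ {ω | ∃ x, a * n / N ≤ heightProcess G h0 (X · ω) n x} ≠ ∞ :=
    ne_top_of_le_ne_top
      ((summable_geometric_of_lt_one (Real.exp_pos _).le hq).mul_left (N * C)).tsum_ofReal_ne_top
      (ENNReal.tsum_le_tsum hbound)
  filter_upwards [ae_eventually_notMem hsum] with ω hω
  filter_upwards [hω] with n hn x
  exact (lt_div_iff₀' hN).1 (not_le.1 fun hx ↦ hn ⟨x, hx⟩)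

end IsUniformIID

lemma exists_isUniformIID (V : Type*) [Fintype V] [Nonempty V] :
    ∃ (Ω : Type) (_ : MeasurableSpace Ω) (μ : Measure Ω) (X : ℕ → Ω → V),
      IsProbabilityMeasure μ ∧ IsUniformIID μ X := by
  let e := Fintype.equivFin V
  have : Nonempty (Fin (Fintype.card V)) := e.nonempty_congr.1 ‹_›
  refine ⟨ℕ → Fin (Fintype.card V), inferInstance,
    Measure.infinitePi fun _ ↦ ProbabilityTheory.uniformOn Set.univ, fun n ω ↦ e.symm (ω n),
    inferInstance, fun n v ↦ ?_, fun n f ↦ ?_⟩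
  · exact (MeasurableSet.of_discrete (s := e.symm ⁻¹' {v})).preimage (measurable_pi_apply n)
  · have hcylinder : {ω : ℕ → Fin (Fintype.card V) | ∀ k < n, e.symm (ω k) = f k} =
        Set.pi (Finset.range n) fun k ↦ {e (f k)} := by
      ext ω; simp [Equiv.symm_apply_eq]
    rw [hcylinder, Measure.infinitePi_pi _ fun _ _ ↦ MeasurableSet.of_discrete]
    simp [ProbabilityTheory.uniformOn_univ]

end DrivingSequence

theorem stmt15_general {V : Type*} [Fintype V] [DecidableEq V]
    (G : SimpleGraph V) [DecidableRel G.Adj] (γ ρ : ℝ) (hγ : IsGrowthRate G γ)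
    (hρ : IsGreatest (spectrum ℝ (G.adjMatrix ℝ + 1)) ρ) :
    γ ≤ Real.exp 1 * ρ := by
  have : Nonempty V := by
    by_contra hV
    rw [not_nonempty_iff] at hV
    exact Set.notMem_empty ρ (by simpa only [spectrum.of_subsingleton] using hρ.1)
  obtain ⟨Ω, _, μ, X, _, hX⟩ := exists_isUniformIID V
  refine le_of_forall_gt_imp_ge_of_dense fun a ha ↦ ?_
  have hlt := hX.ae_eventually_card_mul_heightProcess_lt G (fun _ ↦ 0) zero_le_one hρ.2
    (ha.trans_eq (one_mul a).symm)
  obtain ⟨ω, hω, hlim⟩ := (hlt.and (hγ.2 μ X hX).1).exists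
  refine le_of_tendsto hlim ?_
  filter_upwards [hω, eventually_gt_atTop 0] with n hn hn₀
  rw [div_le_iff₀ (Nat.cast_pos.2 hn₀), Real.mul_iSup_of_nonneg (Nat.cast_nonneg _)]
  exact ciSup_le fun x ↦ (hn x).le

theorem stmt15 {V : Type} [Fintype V] [DecidableEq V] [Nonempty V]
    (G : SimpleGraph V) [DecidableRel G.Adj] (hG : G.Connected)
    (γ ρ : ℝ) (hγ : IsGrowthRate G γ)
    (hρ : IsGreatest (spectrum ℝ (G.adjMatrix ℝ + 1)) ρ) :
    γ ≤ Real.exp 1 * ρ :=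
  stmt15_general G γ ρ hγ hρ
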